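/- Let C be a small category and c an object of C such that for every object d of C the binary product d ⨯ c exists in C. Then the exponentiation-by-y(c) functor on the presheaf category Cᵒᵖ ⥤ Type, namely the internal hom functor ihom (yoneda.obj c) : (Cᵒᵖ ⥤ Type) ⥤ (Cᵒᵖ ⥤ Type) sending X to the exponential X^{yoneda.obj c}, has a right adjoint (i.e., it is a left adjoint). In other words, the representable presheaf yoneda.obj c is an internally tiny object of the presheaf category. -/

import Mathlib

open CategoryTheory Limits

/-- The functor `d ↦ d ⨯ c`, for a fixed object `c` all of whose products `d ⨯ c` exist. -/
noncomputable def prodRightFunctor {C : Type u} [Category.{v} C] (c : C)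
    [∀ d : C, HasBinaryProduct d c] : C ⥤ C where
  obj d := d ⨯ c
  map f := prod.map f (𝟙 c)

open MonoidalCategory in
/-- If all products `d ⨯ c` exist, the product functor with `yoneda.obj c` on presheaves is left
adjoint to precomposition with `d ↦ d ⨯ c`. -/
noncomputable def tensorLeftYonedaAdjunction {C : Type u} [Category.{v} C] (c : C)
    [∀ d : C, HasBinaryProduct d c] :
    tensorLeft (yoneda.obj c) ⊣
      (Functor.whiskeringLeft Cᵒᵖ Cᵒᵖ (Type v)).obj (prodRightFunctor c).op where
  unit.app X :=
    { app d := TypeCat.ofHom fun x ↦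
        ((prod.snd : d.unop ⨯ c ⟶ c), X.map (prod.fst : d.unop ⨯ c ⟶ d.unop).op x)
      naturality := by
        intro d e f
        ext x
        refine Prod.ext (prod.map_snd f.unop (𝟙 c) |>.trans (Category.comp_id _)).symm ?_
        change X.map prod.fst.op (X.map f x) =
          X.map (prod.map f.unop (𝟙 c)).op (X.map prod.fst.op x)
        rw [← Functor.map_comp_apply, ← Functor.map_comp_apply, ← op_comp,
          prod.map_fst, op_comp, Quiver.Hom.op_unop] }
  unit.naturality := by
    intro X Y f
    ext d x
    have key (y : X.obj (Opposite.op d.unop)) :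
        Y.map (prod.fst : d.unop ⨯ c ⟶ d.unop).op (f.app _ y) = f.app _ (X.map prod.fst.op y) :=
      (NatTrans.naturality_apply f _ y).symm
    exact Prod.ext rfl (key x)
  counit.app X :=
    { app d := TypeCat.ofHom fun p ↦ X.map (prod.lift (𝟙 d.unop) p.1).op p.2
      naturality := by
        intro d e f
        ext p
        have key (g : d.unop ⟶ c) (y : X.obj (Opposite.op (d.unop ⨯ c))) :
            X.map (prod.lift (𝟙 e.unop) (f.unop ≫ g)).op
                (X.map (prod.map f.unop (𝟙 c)).op y) =
              X.map f.unop.op (X.map (prod.lift (𝟙 d.unop) g).op y) := by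
          rw [← Functor.map_comp_apply, ← Functor.map_comp_apply, ← op_comp, ← op_comp,
            prod.lift_map, prod.comp_lift, Category.id_comp, Category.comp_id, Category.comp_id]
        exact key p.1 p.2 }
  counit.naturality := by
    intro X Y f
    ext d p
    exact (NatTrans.naturality_apply f (prod.lift (𝟙 d.unop) p.1).op p.2).symm
  left_triangle_components X := by
    ext d p
    have key (g : d.unop ⟶ c) (x : X.obj (Opposite.op d.unop)) :
        X.map (prod.lift (𝟙 d.unop) g).op (X.map prod.fst.op x) = x := by
      rw [← Functor.map_comp_apply, ← op_comp, prod.lift_fst, op_id, Functor.map_id_apply]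
    exact Prod.ext (prod.lift_snd (𝟙 d.unop) p.1) (key p.1 p.2)
  right_triangle_components X := by
    ext d x
    have key (y : X.obj (Opposite.op (d.unop ⨯ c))) :
        X.map (prod.lift (𝟙 (d.unop ⨯ c)) prod.snd).op
          (X.map (prod.map prod.fst (𝟙 c)).op y) = y := by
      rw [← Functor.map_comp_apply, ← op_comp, prod.lift_map, Category.id_comp,
        Category.comp_id, prod.lift_fst_snd, op_id, Functor.map_id_apply]
    exact key x

/-- If `c` is an object of a small category `C` such that all binary products `d ⨯ c`
exist in `C`, then the representable presheaf `yoneda.obj c` is internally tiny: the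
exponentiation functor `ihom (yoneda.obj c)` on presheaves has a right adjoint. -/
theorem yoneda_obj_tiny_of_hasBinaryProducts
    {C : Type u} [SmallCategory C] (c : C)
    (hprod : ∀ d : C, HasBinaryProduct d c) :
    (ihom (yoneda.obj c) : (Cᵒᵖ ⥤ Type u) ⥤ (Cᵒᵖ ⥤ Type u)).IsLeftAdjoint := by
  have : ((Functor.whiskeringLeft Cᵒᵖ Cᵒᵖ (Type u)).obj (prodRightFunctor c).op).IsLeftAdjoint :=
    ((prodRightFunctor c).op.ranAdjunction (Type u)).isLeftAdjoint
  exact Functor.isLeftAdjoint_of_iso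
    ((tensorLeftYonedaAdjunction c).rightAdjointUniq (ihom.adjunction (yoneda.obj c)))
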